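/- For any sequence D = (D_n)_{n=1}^∞ of nonempty open subsets of [0,1] forming a base for the topology of [0,1], the space X_D = (C[0,1], ‖·‖_D) fails to be octahedral: there exist ε > 0 and finitely many points x_1, …, x_n in the unit sphere of X_D such that no y in the unit sphere satisfies ‖x_i + y‖_D > 2 − ε for all i. -/

import Mathlib

open Set Filter Topology

/-- The `n`-th seminorm: `‖x‖ₙ = sup_{d ∈ Dₙ} |x d|`. -/
noncomputable def seminormD (D : ℕ → Set (Icc (0:ℝ) 1)) (n : ℕ)
    (x : C(Icc (0:ℝ) 1, ℝ)) : ℝ :=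
  ⨆ d : D n, |x d|

/-- The norm `‖x‖_D = (Σₙ 2⁻ⁿ ‖x‖ₙ²)^{1/2}` (indexing the sequence from `0`,
with weight `2^{-(n+1)}`). -/
noncomputable def normD (D : ℕ → Set (Icc (0:ℝ) 1)) (x : C(Icc (0:ℝ) 1, ℝ)) : ℝ :=
  Real.sqrt (∑' n : ℕ, (1 / 2 : ℝ) ^ (n + 1) * (seminormD D n x) ^ 2)

/-!
Expanding squares, `‖x + y‖_D²` falls short of `2‖x‖_D² + 2‖y‖_D²` by at least
`2⁻⁽ᵏ⁺¹⁾ (‖x‖ₖ - ‖y‖ₖ)²` for each `k`. So if a unit vector `y` almost doubles the norm of two unit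
vectors `x₁` and `x₂`, then `‖y‖ₖ` is close to both `‖x₁‖ₖ` and `‖x₂‖ₖ`. This is absurd for
`‖x₁‖ₖ ≠ 0 = ‖x₂‖ₖ`, which a normalized constant and a normalized Urysohn function vanishing on
`D k` achieve as soon as `D k` is nonempty and its closure misses a point of some `D m`.
-/

theorem tsum_mul_sq_add_mul_sub_sq_le {ι : Type*} {w a b c : ι → ℝ}
    (hw : ∀ i, 0 ≤ w i) (hc : ∀ i, 0 ≤ c i) (hcab : ∀ i, c i ≤ a i + b i)
    (ha_sum : Summable fun i ↦ w i * a i ^ 2) (hb_sum : Summable fun i ↦ w i * b i ^ 2)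
    (hc_sum : Summable fun i ↦ w i * c i ^ 2) (k : ι) :
    ∑' i, w i * c i ^ 2 + w k * (a k - b k) ^ 2 ≤
      2 * ∑' i, w i * a i ^ 2 + 2 * ∑' i, w i * b i ^ 2 := by
  have hab_sum := (ha_sum.mul_left 2).add (hb_sum.mul_left 2)
  have defect_ge (i : ι) : w i * (a i - b i) ^ 2 ≤
      2 * (w i * a i ^ 2) + 2 * (w i * b i ^ 2) - w i * c i ^ 2 := by
    have hsq : w i * c i ^ 2 ≤ w i * (a i + b i) ^ 2 :=
      mul_le_mul_of_nonneg_left (pow_le_pow_left₀ (hc i) (hcab i) 2) (hw i)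
    linarith
  have defect_nonneg (i : ι) :
      0 ≤ 2 * (w i * a i ^ 2) + 2 * (w i * b i ^ 2) - w i * c i ^ 2 :=
    (mul_nonneg (hw i) (sq_nonneg _)).trans (defect_ge i)
  have defect_le_tsum := (hab_sum.sub hc_sum).le_tsum k fun i _ ↦ defect_nonneg i
  rw [hab_sum.tsum_sub hc_sum, (ha_sum.mul_left 2).tsum_add (hb_sum.mul_left 2),
    tsum_mul_left, tsum_mul_left] at defect_le_tsum
  linarith [defect_ge k]

theorem exists_nonempty_and_not_subset_closure_of_isTopologicalBasis {ι X : Type*}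
    [TopologicalSpace X] [T2Space X] [Nontrivial X] {D : ι → Set X}
    (hD : TopologicalSpace.IsTopologicalBasis (range D)) :
    ∃ k m, (D k).Nonempty ∧ ¬ D m ⊆ closure (D k) := by
  obtain ⟨s, t, hst⟩ := exists_pair_ne X
  obtain ⟨U, V, hU, hV, hsU, htV, hUV⟩ := t2_separation hst
  obtain ⟨_, ⟨k, rfl⟩, hsk, hkU⟩ := hD.exists_subset_of_mem_open hsU hU
  obtain ⟨_, ⟨m, rfl⟩, htm, -⟩ := hD.exists_subset_of_mem_open htV hV
  have hkV : Disjoint (closure (D k)) V := (hUV.mono_left hkU).closure_left hV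
  exact ⟨k, m, ⟨s, hsk⟩, fun hmk ↦ hkV.notMem_of_mem_right htV (hmk htm)⟩

section NormD

variable (D : ℕ → Set (Icc (0 : ℝ) 1)) (n k : ℕ) (x y : C(Icc (0 : ℝ) 1, ℝ))

theorem seminormD_nonneg : 0 ≤ seminormD D n x :=
  Real.iSup_nonneg fun _ ↦ abs_nonneg _

theorem seminormD_le_norm : seminormD D n x ≤ ‖x‖ :=
  Real.iSup_le (fun d ↦ x.norm_coe_le_norm d) (norm_nonneg x)

variable {D n} in
theorem abs_apply_le_seminormD {t : Icc (0 : ℝ) 1} (ht : t ∈ D n) : |x t| ≤ seminormD D n x :=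
  le_ciSup (f := fun d : D n ↦ |x d|)
    ⟨‖x‖, forall_mem_range.2 fun d ↦ x.norm_coe_le_norm d⟩ ⟨t, ht⟩

theorem seminormD_add_le : seminormD D n (x + y) ≤ seminormD D n x + seminormD D n y :=
  Real.iSup_le
    (fun d ↦ (abs_add_le (x d) (y d)).trans
      (add_le_add (abs_apply_le_seminormD x d.2) (abs_apply_le_seminormD y d.2)))
    (add_nonneg (seminormD_nonneg D n x) (seminormD_nonneg D n y))

theorem seminormD_smul (c : ℝ) : seminormD D n (c • x) = |c| * seminormD D n x := by
  simp only [seminormD, Real.mul_iSup_of_nonneg (abs_nonneg c), ContinuousMap.smul_apply,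
    smul_eq_mul, abs_mul]

variable {D n x} in
theorem seminormD_eq_zero_of_eqOn (hx : EqOn x 0 (D n)) : seminormD D n x = 0 :=
  (Real.iSup_le (fun d ↦ by simp [hx d.2]) le_rfl).antisymm (seminormD_nonneg D n x)

variable {D n x} in
theorem seminormD_pos {t : Icc (0 : ℝ) 1} (ht : t ∈ D n) (hx : x t ≠ 0) :
    0 < seminormD D n x :=
  (abs_pos.2 hx).trans_le (abs_apply_le_seminormD x ht)

theorem summable_seminormD_sq :
    Summable fun n : ℕ ↦ (1 / 2 : ℝ) ^ (n + 1) * seminormD D n x ^ 2 := by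
  refine .of_nonneg_of_le (fun n ↦ by positivity) (fun n ↦ ?_)
    (((summable_nat_add_iff 1).2 summable_geometric_two).mul_right (‖x‖ ^ 2))
  gcongr
  exacts [seminormD_nonneg D n x, seminormD_le_norm D n x]

theorem normD_nonneg : 0 ≤ normD D x :=
  Real.sqrt_nonneg _

theorem normD_sq : normD D x ^ 2 = ∑' n : ℕ, (1 / 2 : ℝ) ^ (n + 1) * seminormD D n x ^ 2 :=
  Real.sq_sqrt (tsum_nonneg fun n ↦ by positivity)

variable {D n x} in
theorem normD_pos_of_seminormD_pos (hx : 0 < seminormD D n x) : 0 < normD D x :=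
  Real.sqrt_pos.2 <|
    (summable_seminormD_sq D x).tsum_pos (fun _ ↦ by positivity) n (by positivity)

theorem normD_smul (c : ℝ) : normD D (c • x) = |c| * normD D x := by
  rw [← pow_left_inj₀ (normD_nonneg D _) (mul_nonneg (abs_nonneg c) (normD_nonneg D x))
    two_ne_zero, mul_pow, normD_sq, normD_sq, ← tsum_mul_left]
  exact tsum_congr fun n ↦ by rw [seminormD_smul]; ring

variable {D x} in
theorem normD_inv_normD_smul (hx : 0 < normD D x) : normD D ((normD D x)⁻¹ • x) = 1 := by
  rw [normD_smul, abs_of_pos (inv_pos.2 hx), inv_mul_cancel₀ hx.ne']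

theorem normD_add_sq_add_le :
    normD D (x + y) ^ 2 + (1 / 2 : ℝ) ^ (k + 1) * (seminormD D k x - seminormD D k y) ^ 2 ≤
      2 * normD D x ^ 2 + 2 * normD D y ^ 2 := by
  simp only [normD_sq]
  exact tsum_mul_sq_add_mul_sub_sq_le (fun n ↦ by positivity)
    (fun n ↦ seminormD_nonneg D n (x + y)) (fun n ↦ seminormD_add_le D n x y)
    (summable_seminormD_sq D x) (summable_seminormD_sq D y) (summable_seminormD_sq D (x + y)) k

variable {D y} in
theorem min_normD_add_le {x₁ x₂ : C(Icc (0 : ℝ) 1, ℝ)} (hx₁ : normD D x₁ = 1)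
    (hx₂ : normD D x₂ = 1) (hy : normD D y = 1) :
    min (normD D (x₁ + y)) (normD D (x₂ + y)) ≤
      2 - (1 / 2 : ℝ) ^ (k + 1) * (seminormD D k x₁ - seminormD D k x₂) ^ 2 / 16 := by
  set w : ℝ := (1 / 2) ^ (k + 1)
  set p := seminormD D k
  set N := min (normD D (x₁ + y)) (normD D (x₂ + y))
  have hN : 0 ≤ N := le_min (normD_nonneg D _) (normD_nonneg D _)
  have hN₁ : N ^ 2 + w * (p x₁ - p y) ^ 2 ≤ 4 := by
    have := normD_add_sq_add_le D k x₁ y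
    rw [hx₁, hy] at this
    linarith [pow_le_pow_left₀ hN (min_le_left _ _) 2]
  have hN₂ : N ^ 2 + w * (p x₂ - p y) ^ 2 ≤ 4 := by
    have := normD_add_sq_add_le D k x₂ y
    rw [hx₂, hy] at this
    linarith [pow_le_pow_left₀ hN (min_le_right _ _) 2]
  have hp : w * (p x₁ - p x₂) ^ 2 ≤ 2 * (w * (p x₁ - p y) ^ 2 + w * (p x₂ - p y) ^ 2) := by
    have : 0 ≤ w * (p x₁ - p y + (p x₂ - p y)) ^ 2 := by positivity
    linarith
  -- Now `4N - 4 ≤ N² ≤ 4 - w (p x₁ - p x₂)² / 4`.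
  linarith [sq_nonneg (N - 2)]

variable {D k} {m : ℕ}

theorem exists_normD_eq_one_seminormD_ne_zero (hk : (D k).Nonempty) :
    ∃ x, normD D x = 1 ∧ seminormD D k x ≠ 0 := by
  obtain ⟨t, ht⟩ := hk
  have hone : 0 < seminormD D k 1 := seminormD_pos ht one_ne_zero
  have hnorm := normD_pos_of_seminormD_pos hone
  refine ⟨(normD D 1)⁻¹ • 1, normD_inv_normD_smul hnorm, ?_⟩
  rw [seminormD_smul]
  positivity

theorem exists_normD_eq_one_seminormD_eq_zero (hkm : ¬ D m ⊆ closure (D k)) :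
    ∃ x, normD D x = 1 ∧ seminormD D k x = 0 := by
  obtain ⟨t, htm, htk⟩ := not_subset.1 hkm
  obtain ⟨f, hfk, hft, -⟩ := exists_continuous_zero_one_of_isClosed
    (isClosed_closure (s := D k)) isClosed_singleton (disjoint_singleton_right.2 htk)
  have hf : 0 < seminormD D m f := seminormD_pos htm (by simp [hft (mem_singleton t)])
  refine ⟨(normD D f)⁻¹ • f, normD_inv_normD_smul (normD_pos_of_seminormD_pos hf), ?_⟩
  rw [seminormD_smul, seminormD_eq_zero_of_eqOn (hfk.mono subset_closure), mul_zero]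

theorem normD_not_octahedral_general (hk : (D k).Nonempty) (hkm : ¬ D m ⊆ closure (D k)) :
    ∃ ε : ℝ, 0 < ε ∧ ∃ (n : ℕ) (x : Fin n → C(Icc (0 : ℝ) 1, ℝ)),
      (∀ i, normD D (x i) = 1) ∧
      ¬ ∃ y : C(Icc (0 : ℝ) 1, ℝ), normD D y = 1 ∧
          ∀ i, normD D (x i + y) > 2 - ε := by
  obtain ⟨x₁, hx₁, hpx₁⟩ := exists_normD_eq_one_seminormD_ne_zero hk
  obtain ⟨x₂, hx₂, hpx₂⟩ := exists_normD_eq_one_seminormD_eq_zero hkm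
  have hgap : seminormD D k x₁ - seminormD D k x₂ ≠ 0 := by rwa [hpx₂, sub_zero]
  refine ⟨(1 / 2 : ℝ) ^ (k + 1) * (seminormD D k x₁ - seminormD D k x₂) ^ 2 / 16,
    by positivity, 2, ![x₁, x₂], Fin.forall_fin_two.2 ⟨hx₁, hx₂⟩, ?_⟩
  rintro ⟨y, hy, hlarge⟩
  exact (lt_min (hlarge 0) (hlarge 1)).not_ge (min_normD_add_le k hx₁ hx₂ hy)

end NormD

/-- For any base `D` of nonempty open sets of `[0,1]`, the space `X_D = (C[0,1], ‖·‖_D)`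
fails to be octahedral: there are `ε > 0` and finitely many norm-one points such that no
norm-one `y` satisfies `‖xᵢ + y‖_D > 2 - ε` for every `i`. -/
theorem normD_not_octahedral (D : ℕ → Set (Icc (0:ℝ) 1))
    (hDopen : ∀ n, IsOpen (D n)) (hDne : ∀ n, (D n).Nonempty)
    (hbasis : TopologicalSpace.IsTopologicalBasis (Set.range D)) :
    ∃ ε : ℝ, 0 < ε ∧ ∃ (n : ℕ) (x : Fin n → C(Icc (0:ℝ) 1, ℝ)),
      (∀ i, normD D (x i) = 1) ∧
      ¬ ∃ y : C(Icc (0:ℝ) 1, ℝ), normD D y = 1 ∧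
          ∀ i, normD D (x i + y) > 2 - ε := by
  obtain ⟨k, m, hk, hkm⟩ := exists_nonempty_and_not_subset_closure_of_isTopologicalBasis hbasis
  exact normD_not_octahedral_general hk hkm
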